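/- arXiv:2502.13331 — 3 statements merged into one kernel-verified Lean document; each statement's English description precedes it below -/
import Mathlib

section
/- Let q be a prime power with q ≡ 1 (mod 20) and let β be a primitive 5th root of unity in F_q. Then (q,10) gives a 3-design if and only if χ(1+β) = −1, where χ is the quadratic residue character of F_q. -/
/-!
Setting: `F` is a finite field of order `q`. The projective line `PG(1,q)` is
modelled as `Projectivization F (Fin 2 → F)`. Since scalar matrices act trivially
on the projective line, the images of a set under all elements of `SL(2,F)` form
exactly its `PSL(2,F)`-orbit; `mapSL g` is the map of the projective line induced
by `g : SL(2,F)`. For `k ∣ q - 1`, the unique subgroup of order `k` of `Fˣ` is the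
set of `k`-th roots of unity `{x : F | x ^ k = 1}`, embedded into the projective
line via `x ↦ [x : 1]`. `(q, k)` gives a 3-design iff there is `lam > 0` such that
every 3-subset of the projective line lies in exactly `lam` blocks of the orbit.
-/

noncomputable section

open Matrix

/-- The point at infinity `[1 : 0]` of the projective line over `F`. -/
def inftyPt (F : Type) [Field F] : Projectivization F (Fin 2 → F) :=
  Projectivization.mk F ![1, 0] (by
    intro h
    simpa using congrFun h 0)

/-- The embedding of `F` into the projective line, `x ↦ [x : 1]`. -/
def embedPt (F : Type) [Field F] (x : F) : Projectivization F (Fin 2 → F) :=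
  Projectivization.mk F ![x, 1] (by
    intro h
    simpa using congrFun h 1)

/-- The action of `g : SL(2,F)` on the projective line (as linear fractional
transformation). -/
def mapSL {F : Type} [Field F] (g : Matrix.SpecialLinearGroup (Fin 2) F) :
    Projectivization F (Fin 2 → F) → Projectivization F (Fin 2 → F) :=
  Projectivization.map (Matrix.SpecialLinearGroup.toLin' g : (Fin 2 → F) →ₗ[F] (Fin 2 → F))
    (Matrix.SpecialLinearGroup.toLin' g).injective

/-- The starter block: the unique subgroup of order `k` of `Fˣ` (the `k`-th roots
of unity, for `k ∣ q - 1`), regarded as a subset of the projective line. -/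
def starterB (F : Type) [Field F] (k : ℕ) : Set (Projectivization F (Fin 2 → F)) :=
  embedPt F '' {x : F | x ^ k = 1}

/-- The `PSL(2,F)`-orbit `GB` of the starter block. -/
def designBlocks (F : Type) [Field F] (k : ℕ) :
    Set (Set (Projectivization F (Fin 2 → F))) :=
  {S | ∃ g : Matrix.SpecialLinearGroup (Fin 2) F, S = mapSL g '' starterB F k}

/-- `GB` is the block set of a `3-(q+1, k, lam)` design: `lam` is positive and every
3-subset of the projective line is contained in exactly `lam` blocks. -/
def isThreeDesign (F : Type) [Field F] (k lam : ℕ) : Prop :=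
  0 < lam ∧
    ∀ T : Finset (Projectivization F (Fin 2 → F)), T.card = 3 →
      {S ∈ designBlocks F k | (T : Set (Projectivization F (Fin 2 → F))) ⊆ S}.ncard = lam

/-- `(q, k)` gives a 3-design. -/
def gives3Design (F : Type) [Field F] (k : ℕ) : Prop :=
  ∃ lam : ℕ, isThreeDesign F k lam


section helpers

set_option linter.unusedSectionVars false

abbrev PP (F : Type) [Field F] := Projectivization F (Fin 2 → F)
abbrev SL2 (F : Type) [Field F] := Matrix.SpecialLinearGroup (Fin 2) F

/-- the 2x2 determinant -/
def dd {F : Type} [Field F] (v w : Fin 2 → F) : F := v 0 * w 1 - w 0 * v 1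

theorem mk_eq_iff_dd {F : Type} [Field F] (v w : Fin 2 → F) (hv : v ≠ 0) (hw : w ≠ 0) :
    Projectivization.mk F v hv = Projectivization.mk F w hw ↔ dd v w = 0 := by
  rw [Projectivization.mk_eq_mk_iff']
  unfold dd
  constructor
  · rintro ⟨a, rfl⟩
    simp only [Pi.smul_apply, smul_eq_mul]; ring
  · intro h
    have hw' : w 0 ≠ 0 ∨ w 1 ≠ 0 := by
      by_contra hc
      push Not at hc
      apply hw
      funext i
      fin_cases i
      · exact hc.1
      · exact hc.2
    rcases hw' with h0 | h0
    · refine ⟨v 0 / w 0, ?_⟩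
      funext i
      fin_cases i
      · simp; field_simp
      · simp; field_simp; linear_combination h
    · refine ⟨v 1 / w 1, ?_⟩
      funext i
      fin_cases i
      · simp; field_simp; linear_combination -h
      · simp; field_simp

theorem mapSL_mk {F : Type} [Field F] (g : SL2 F) (v : Fin 2 → F) (hv : v ≠ 0)
    (hv' : (g : Matrix (Fin 2) (Fin 2) F) *ᵥ v ≠ 0) :
    mapSL g (Projectivization.mk F v hv) = Projectivization.mk F ((g : Matrix (Fin 2) (Fin 2) F) *ᵥ v) hv' := rfl

theorem mulVec_ne {F : Type} [Field F] (g : SL2 F) (v : Fin 2 → F) (hv : v ≠ 0) :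
    (g : Matrix (Fin 2) (Fin 2) F) *ᵥ v ≠ 0 := by
  intro h
  apply hv
  have : (Matrix.SpecialLinearGroup.toLin' g) v = 0 := h
  simpa using this

theorem mapSL_mul {F : Type} [Field F] (g h : SL2 F) (p : PP F) :
    mapSL (g * h) p = mapSL g (mapSL h p) := by
  induction p using Projectivization.ind with
  | h v hv =>
    rw [mapSL_mk h v hv (mulVec_ne h v hv), mapSL_mk _ _ _ (mulVec_ne g _ (mulVec_ne h v hv)),
      mapSL_mk _ v hv (mulVec_ne _ v hv)]
    simp only [Matrix.mulVec_mulVec, Matrix.SpecialLinearGroup.coe_mul]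

theorem mapSL_one {F : Type} [Field F] (p : PP F) :
    mapSL (1 : SL2 F) p = p := by
  induction p using Projectivization.ind with
  | h v hv =>
    rw [mapSL_mk _ v hv (mulVec_ne _ v hv)]
    simp

theorem mapSL_inv_mapSL {F : Type} [Field F] (g : SL2 F) (p : PP F) :
    mapSL g⁻¹ (mapSL g p) = p := by
  rw [← mapSL_mul, inv_mul_cancel, mapSL_one]

theorem mapSL_mapSL_inv {F : Type} [Field F] (g : SL2 F) (p : PP F) :
    mapSL g (mapSL g⁻¹ p) = p := by
  rw [← mapSL_mul, mul_inv_cancel, mapSL_one]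

theorem mapSL_inj {F : Type} [Field F] (g : SL2 F) : Function.Injective (mapSL g) :=
  Function.LeftInverse.injective (mapSL_inv_mapSL g)

theorem dd_mulVec {F : Type} [Field F] (g : SL2 F) (v w : Fin 2 → F) :
    dd ((g : Matrix (Fin 2) (Fin 2) F) *ᵥ v) ((g : Matrix (Fin 2) (Fin 2) F) *ᵥ w) = dd v w := by
  have h := g.2
  rw [Matrix.det_fin_two] at h
  simp only [dd, Matrix.mulVec, dotProduct, Fin.sum_univ_two]
  linear_combination (v 0 * w 1 - w 0 * v 1) * h

variable {F : Type} [Field F] [Fintype F] [DecidableEq F]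

def sg (p₁ p₂ p₃ : PP F) : ℤ :=
  quadraticChar F (dd p₁.rep p₂.rep * dd p₂.rep p₃.rep * dd p₃.rep p₁.rep)

theorem sg_mk (u v w : Fin 2 → F) (hu : u ≠ 0) (hv : v ≠ 0) (hw : w ≠ 0) :
    sg (Projectivization.mk F u hu) (Projectivization.mk F v hv) (Projectivization.mk F w hw)
      = quadraticChar F (dd u v * dd v w * dd w u) := by
  obtain ⟨a, ha⟩ := Projectivization.exists_smul_eq_mk_rep F u hu
  obtain ⟨b, hb⟩ := Projectivization.exists_smul_eq_mk_rep F v hv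
  obtain ⟨c, hc⟩ := Projectivization.exists_smul_eq_mk_rep F w hw
  unfold sg
  rw [← ha, ← hb, ← hc]
  have : dd (a • u) (b • v) * dd (b • v) (c • w) * dd (c • w) (a • u)
      = ((a * b * c : F)) ^ 2 * (dd u v * dd v w * dd w u) := by
    simp only [dd, Pi.smul_apply, Units.smul_def, smul_eq_mul]; ring
  rw [this, map_mul, quadraticChar_sq_one' (by simp), one_mul]

theorem sg_map (g : SL2 F) (p₁ p₂ p₃ : PP F) :
    sg (mapSL g p₁) (mapSL g p₂) (mapSL g p₃) = sg p₁ p₂ p₃ := by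
  induction p₁ using Projectivization.ind with
  | h u hu =>
  induction p₂ using Projectivization.ind with
  | h v hv =>
  induction p₃ using Projectivization.ind with
  | h w hw =>
  rw [mapSL_mk _ _ _ (mulVec_ne g _ hu), mapSL_mk _ _ _ (mulVec_ne g _ hv),
    mapSL_mk _ _ _ (mulVec_ne g _ hw), sg_mk, sg_mk, dd_mulVec, dd_mulVec, dd_mulVec]

theorem sg_ne_zero_iff (p₁ p₂ p₃ : PP F) :
    sg p₁ p₂ p₃ ≠ 0 ↔ p₁ ≠ p₂ ∧ p₂ ≠ p₃ ∧ p₃ ≠ p₁ := by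
  induction p₁ using Projectivization.ind with
  | h u hu =>
  induction p₂ using Projectivization.ind with
  | h v hv =>
  induction p₃ using Projectivization.ind with
  | h w hw =>
  rw [sg_mk]
  simp only [ne_eq, mk_eq_iff_dd, quadraticChar_eq_zero_iff, mul_eq_zero, not_or, and_assoc]

theorem sg_std (c : F) : sg (inftyPt F) (embedPt F 0) (embedPt F c) = quadraticChar F c := by
  unfold inftyPt embedPt
  rw [sg_mk]
  congr 1
  simp [dd]

theorem sg_embed (a b c : F) : sg (embedPt F a) (embedPt F b) (embedPt F c)
    = quadraticChar F ((a - b) * (b - c) * (c - a)) := by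
  unfold embedPt
  rw [sg_mk]
  congr 1
  simp [dd]

def mkSL (a b c d : F) (h : a * d - b * c = 1) : SL2 F :=
  ⟨!![a, b; c, d], by rw [Matrix.det_fin_two_of]; exact h⟩

theorem mkSL_map (a b c d : F) (h : a * d - b * c = 1) (x y : F) (hv : ![x, y] ≠ 0)
    (w : Fin 2 → F) (hw : w ≠ 0) (e : (a * x + b * y) * w 1 = w 0 * (c * x + d * y)) :
    mapSL (mkSL a b c d h) (Projectivization.mk F ![x, y] hv) = Projectivization.mk F w hw := by
  rw [mapSL_mk _ _ _ (mulVec_ne _ _ hv), mk_eq_iff_dd]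
  simp only [mkSL, dd]
  simp [Matrix.mulVec, dotProduct, Fin.sum_univ_two]
  linear_combination e

/-- move to standard position -/
theorem exists_std (p₁ p₂ p₃ : PP F) (h : sg p₁ p₂ p₃ ≠ 0) :
    ∃ (g : SL2 F) (c : F), mapSL g (inftyPt F) = p₁ ∧ mapSL g (embedPt F 0) = p₂ ∧
      mapSL g (embedPt F c) = p₃ := by
  induction p₁ using Projectivization.ind with
  | h u hu =>
  induction p₂ using Projectivization.ind with
  | h v hv =>
  induction p₃ using Projectivization.ind with
  | h w hw =>
  rw [sg_ne_zero_iff] at h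
  simp only [ne_eq, mk_eq_iff_dd] at h
  obtain ⟨h1, h2, h3⟩ := h
  have h1' := h1
  have h3' := h3
  unfold dd at h1' h3'
  have hdet : u 0 * (v 1 / dd u v) - (v 0 / dd u v) * u 1 = 1 := by
    field_simp
    rfl
  refine ⟨mkSL _ _ _ _ hdet, (dd v w) / (dd u v * dd w u), mkSL_map _ _ _ _ _ _ _ _ _ _ ?_,
    mkSL_map _ _ _ _ _ _ _ _ _ _ ?_, mkSL_map _ _ _ _ _ _ _ _ _ _ ?_⟩
  · ring
  · ring
  · field_simp
    simp only [dd]; ring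

theorem exists_diag (c d : F) (h : quadraticChar F c = quadraticChar F d) (hc : c ≠ 0) :
    ∃ g : SL2 F, mapSL g (inftyPt F) = inftyPt F ∧ mapSL g (embedPt F 0) = embedPt F 0 ∧
      mapSL g (embedPt F c) = embedPt F d := by
  have hd : d ≠ 0 := by
    rintro rfl
    rw [quadraticChar_zero, quadraticChar_eq_zero_iff] at h
    exact hc h
  have : IsSquare (c * d) := by
    rw [← quadraticChar_one_iff_isSquare (mul_ne_zero hc hd), map_mul, h, ← sq,
      quadraticChar_sq_one hd]
  obtain ⟨s, hs⟩ := this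
  have hs0 : s ≠ 0 := by rintro rfl; simp [hc, hd] at hs
  have hdet : (s / c) * (c / s) - 0 * 0 = 1 := by
    field_simp
    simp
  refine ⟨mkSL _ _ _ _ hdet, mkSL_map _ _ _ _ _ _ _ _ _ _ ?_,
    mkSL_map _ _ _ _ _ _ _ _ _ _ ?_, mkSL_map _ _ _ _ _ _ _ _ _ _ ?_⟩
  · simp
  · simp
  · simp
    field_simp
    linear_combination -hs

theorem exists_map (p₁ p₂ p₃ r₁ r₂ r₃ : PP F) (h : sg p₁ p₂ p₃ ≠ 0)
    (h' : sg p₁ p₂ p₃ = sg r₁ r₂ r₃) :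
    ∃ g : SL2 F, mapSL g p₁ = r₁ ∧ mapSL g p₂ = r₂ ∧ mapSL g p₃ = r₃ := by
  obtain ⟨g, c, e1, e2, e3⟩ := exists_std p₁ p₂ p₃ h
  obtain ⟨g', d, e1', e2', e3'⟩ := exists_std r₁ r₂ r₃ (h' ▸ h)
  have hc : sg p₁ p₂ p₃ = quadraticChar F c := by rw [← e1, ← e2, ← e3, sg_map, sg_std]
  have hd : sg r₁ r₂ r₃ = quadraticChar F d := by rw [← e1', ← e2', ← e3', sg_map, sg_std]
  obtain ⟨k, k1, k2, k3⟩ := exists_diag c d (by rw [← hc, ← hd, h']) (by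
    rintro rfl; simp [hc] at h)
  refine ⟨g' * k * g⁻¹, ?_, ?_, ?_⟩
  · rw [mapSL_mul, mapSL_mul, ← e1, mapSL_inv_mapSL, k1, e1']
  · rw [mapSL_mul, mapSL_mul, ← e2, mapSL_inv_mapSL, k2, e2']
  · rw [mapSL_mul, mapSL_mul, ← e3, mapSL_inv_mapSL, k3, e3']

theorem fix_std (g : SL2 F) (c : F) (hc : c ≠ 0) (h1 : mapSL g (inftyPt F) = inftyPt F)
    (h2 : mapSL g (embedPt F 0) = embedPt F 0) (h3 : mapSL g (embedPt F c) = embedPt F c)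
    (p : PP F) : mapSL g p = p := by
  unfold inftyPt at h1
  unfold embedPt at h2 h3
  rw [mapSL_mk _ _ _ (mulVec_ne _ _ (by simp)), mk_eq_iff_dd] at h1
  rw [mapSL_mk _ _ _ (mulVec_ne _ _ (by simp)), mk_eq_iff_dd] at h2
  rw [mapSL_mk _ _ _ (mulVec_ne _ _ (by simp)), mk_eq_iff_dd] at h3
  simp [dd, Matrix.mulVec, dotProduct, Fin.sum_univ_two] at h1 h2 h3
  simp [h1, h2] at h3
  have h4 : (g : Matrix (Fin 2) (Fin 2) F) 0 0 = (g : Matrix (Fin 2) (Fin 2) F) 1 1 :=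
    mul_right_cancel₀ hc (by linear_combination h3)
  induction p using Projectivization.ind with
  | h u hu =>
  rw [mapSL_mk _ _ _ (mulVec_ne _ _ hu), mk_eq_iff_dd]
  simp [dd, Matrix.mulVec, dotProduct, Fin.sum_univ_two, h1, h2, h4]
  ring

theorem fix_all (g : SL2 F) (p₁ p₂ p₃ : PP F) (h : sg p₁ p₂ p₃ ≠ 0) (h1 : mapSL g p₁ = p₁)
    (h2 : mapSL g p₂ = p₂) (h3 : mapSL g p₃ = p₃) (p : PP F) : mapSL g p = p := by
  obtain ⟨k, c, e1, e2, e3⟩ := exists_std p₁ p₂ p₃ h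
  have hc : sg p₁ p₂ p₃ = quadraticChar F c := by rw [← e1, ← e2, ← e3, sg_map, sg_std]
  have := fix_std (k⁻¹ * g * k) c (by rintro rfl; simp [hc] at h)
    (by rw [mapSL_mul, mapSL_mul, e1, h1, ← e1, mapSL_inv_mapSL])
    (by rw [mapSL_mul, mapSL_mul, e2, h2, ← e2, mapSL_inv_mapSL])
    (by rw [mapSL_mul, mapSL_mul, e3, h3, ← e3, mapSL_inv_mapSL]) (mapSL k⁻¹ p)
  rw [mapSL_mul, mapSL_mul, mapSL_mapSL_inv] at this
  exact mapSL_inj _ this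

theorem embedPt_inj : Function.Injective (embedPt F) := by
  intro a b h
  unfold embedPt at h
  rw [mk_eq_iff_dd] at h
  simp [dd] at h
  exact sub_eq_zero.mp h

theorem card_cosets {G ι : Type} [Group G] (H N : Set G) (g0 : ι → G)
    (h1 : ∀ i, ∀ h ∈ H, g0 i * h ∈ N) (h2 : ∀ g ∈ N, ∃ i, ∃ h ∈ H, g = g0 i * h)
    (h3 : ∀ i j, ∀ h ∈ H, ∀ h' ∈ H, g0 i * h = g0 j * h' → i = j) :
    Nat.card N = Nat.card ι * Nat.card H := by
  rw [← Nat.card_prod]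
  symm
  refine Nat.card_congr (Equiv.ofBijective
    (fun x : ι × H => (⟨g0 x.1 * x.2, h1 _ _ x.2.2⟩ : N)) ⟨?_, ?_⟩)
  · rintro ⟨i, h⟩ ⟨j, h'⟩ e
    simp only [Subtype.mk.injEq] at e
    obtain rfl := h3 i j _ h.2 _ h'.2 e
    have := mul_left_cancel e
    simp [Subtype.ext_iff, this]
  · rintro ⟨g, hg⟩
    obtain ⟨i, h, hh, e⟩ := h2 g hg
    exact ⟨(i, ⟨h, hh⟩), by simp [e]⟩

/-- the ordered triples of roots of unity with given sign -/
def trip (F : Type) [Field F] [Fintype F] [DecidableEq F] (k : ℕ) (s : ℤ) : Set (F × F × F) :=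
  {x | x.1 ^ k = 1 ∧ x.2.1 ^ k = 1 ∧ x.2.2 ^ k = 1 ∧
    sg (embedPt F x.1) (embedPt F x.2.1) (embedPt F x.2.2) = s}

def NN (k : ℕ) (p₁ p₂ p₃ : PP F) : Set (SL2 F) :=
  {g | p₁ ∈ mapSL g '' starterB F k ∧ p₂ ∈ mapSL g '' starterB F k ∧ p₃ ∈ mapSL g '' starterB F k}

def KK (F : Type) [Field F] : Set (SL2 F) := {g | ∀ p : PP F, mapSL g p = p}

def SS (F : Type) [Field F] (k : ℕ) : Set (SL2 F) := {g | mapSL g '' starterB F k = starterB F k}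

theorem card_NN1 (k : ℕ) (p₁ p₂ p₃ : PP F) (h : sg p₁ p₂ p₃ ≠ 0) :
    Nat.card (NN k p₁ p₂ p₃) = Nat.card (trip F k (sg p₁ p₂ p₃)) * Nat.card (KK F) := by
  have ex : ∀ x : trip F k (sg p₁ p₂ p₃), ∃ g : SL2 F, mapSL g (embedPt F x.1.1) = p₁ ∧
      mapSL g (embedPt F x.1.2.1) = p₂ ∧ mapSL g (embedPt F x.1.2.2) = p₃ := by
    rintro ⟨⟨a, b, c⟩, ha, hb, hc, hs⟩
    exact exists_map _ _ _ _ _ _ (hs.symm ▸ h) hs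
  choose g0 k1 k2 k3 using ex
  apply card_cosets (KK F) _ g0
  · rintro x g hg
    obtain ⟨ha, hb, hc, hs⟩ := x.2
    exact ⟨⟨_, ⟨_, ha, rfl⟩, by rw [mapSL_mul, hg, k1]⟩, ⟨_, ⟨_, hb, rfl⟩, by rw [mapSL_mul, hg, k2]⟩,
      ⟨_, ⟨_, hc, rfl⟩, by rw [mapSL_mul, hg, k3]⟩⟩
  · rintro g ⟨⟨_, ⟨a, ha, rfl⟩, e1⟩, ⟨_, ⟨b, hb, rfl⟩, e2⟩, ⟨_, ⟨c, hc, rfl⟩, e3⟩⟩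
    have hs : sg (embedPt F a) (embedPt F b) (embedPt F c) = sg p₁ p₂ p₃ := by
      rw [← e1, ← e2, ← e3, sg_map]
    let x : trip F k (sg p₁ p₂ p₃) := ⟨(a, b, c), ha, hb, hc, hs⟩
    refine ⟨x, (g0 x)⁻¹ * g, ?_, by group⟩
    have e1' : mapSL (g0 x) (embedPt F a) = p₁ := k1 x
    have e2' : mapSL (g0 x) (embedPt F b) = p₂ := k2 x
    have e3' : mapSL (g0 x) (embedPt F c) = p₃ := k3 x
    refine fix_all _ (embedPt F a) (embedPt F b) (embedPt F c) (hs ▸ h) ?_ ?_ ?_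
    · rw [mapSL_mul, e1, ← e1', mapSL_inv_mapSL]
    · rw [mapSL_mul, e2, ← e2', mapSL_inv_mapSL]
    · rw [mapSL_mul, e3, ← e3', mapSL_inv_mapSL]
  · intro x y g hg g' hg' e
    have key : ∀ p, mapSL (g0 x) p = mapSL (g0 y) p := by
      intro p
      have := congrArg (fun g => mapSL g p) e
      simp only [mapSL_mul] at this
      rwa [hg, hg'] at this
    have h1 := (k1 x).trans (k1 y).symm
    have h2 := (k2 x).trans (k2 y).symm
    have h3 := (k3 x).trans (k3 y).symm
    rw [key] at h1 h2 h3
    apply Subtype.ext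
    apply Prod.ext
    · exact embedPt_inj (mapSL_inj _ h1)
    apply Prod.ext
    · exact embedPt_inj (mapSL_inj _ h2)
    · exact embedPt_inj (mapSL_inj _ h3)

theorem image_mul (g h : SL2 F) (S : Set (PP F)) :
    mapSL (g * h) '' S = mapSL g '' (mapSL h '' S) := by
  rw [Set.image_image]
  simp only [mapSL_mul]

theorem image_one (S : Set (PP F)) : mapSL (1 : SL2 F) '' S = S := by
  simp only [mapSL_one, Set.image_id']

theorem card_NN2 (k : ℕ) (p₁ p₂ p₃ : PP F) (T : Set (PP F)) (hT : T = {p₁, p₂, p₃}) :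
    Nat.card (NN k p₁ p₂ p₃) =
      {S ∈ designBlocks F k | T ⊆ S}.ncard * Nat.card (SS F k) := by
  have ex : ∀ S : {S ∈ designBlocks F k | T ⊆ S}, ∃ g : SL2 F, S.1 = mapSL g '' starterB F k :=
    fun S => S.2.1
  choose g0 k0 using ex
  rw [← Nat.card_coe_set_eq]
  have hsub : ∀ g : SL2 F, g ∈ NN k p₁ p₂ p₃ ↔ T ⊆ mapSL g '' starterB F k := by
    intro g
    rw [hT, Set.insert_subset_iff, Set.insert_subset_iff, Set.singleton_subset_iff]
    rfl
  apply card_cosets (SS F k) _ g0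
  · intro S g hg
    rw [hsub, image_mul, hg, ← k0]
    exact S.2.2
  · intro g hg
    rw [hsub] at hg
    let S : {S ∈ designBlocks F k | T ⊆ S} := ⟨_, ⟨g, rfl⟩, hg⟩
    refine ⟨S, (g0 S)⁻¹ * g, ?_, by group⟩
    have : mapSL g '' starterB F k = mapSL (g0 S) '' starterB F k := k0 S
    change _ = _
    rw [image_mul, this, ← image_mul, inv_mul_cancel, image_one]
  · intro S S' g hg g' hg' e
    apply Subtype.ext
    rw [k0 S, k0 S']
    have := congrArg (fun g => mapSL g '' starterB F k) e
    simp only [image_mul] at this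
    rwa [hg, hg'] at this

def ff (a b c : ℤ) : Fin 10 → ℤ := ![0, a * b, a, a * b, b, c, b, a * b, a, a * b]

theorem ff_sum (a b c : ℤ) (ha : a = 1 ∨ a = -1) (hb : b = 1 ∨ b = -1) (hc : c = 1 ∨ c = -1) :
    (∑ x : Fin 10 × Fin 10 × Fin 10,
      ff a b c (x.2.1 - x.1) * ff a b c (x.2.2 - x.2.1) * ff a b c (x.1 - x.2.2))
      = 120 * ((a + b) * (2 + c)) := by
  simp only [Fintype.sum_prod_type]
  rcases ha with rfl | rfl <;> rcases hb with rfl | rfl <;> rcases hc with rfl | rfl <;>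
    decide +kernel

theorem chi_pow_one (x : F) (hm : quadraticChar F (-1) = 1) (β : F) (h5 : β ^ 5 = 1)
    (h : ∃ n, x = β ^ n ∨ x = - β ^ n) : quadraticChar F x = 1 := by
  have hb0 : β ≠ 0 := by rintro rfl; simp at h5
  have hb : quadraticChar F β = 1 := by
    have : β = (β ^ 3) ^ 2 := by linear_combination (-β) * h5
    rw [this]
    exact quadraticChar_sq_one' (pow_ne_zero _ hb0)
  obtain ⟨n, rfl | rfl⟩ := h
  · rw [map_pow, hb, one_pow]
  · rw [neg_eq_neg_one_mul, map_mul, hm, map_pow, hb, one_pow, one_mul]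

theorem chi_div (x y z : F) (h : x * y = z) (hy : y ≠ 0) :
    quadraticChar F x = quadraticChar F z * quadraticChar F y := by
  rw [← h, map_mul, mul_assoc, ← sq, quadraticChar_sq_one hy, mul_one]

theorem chi_ff (hm : quadraticChar F (-1) = 1) (β : F) (hβ : orderOf β = 5) (m : Fin 10) :
    quadraticChar F (1 - (-β) ^ (m : ℕ)) =
      ff (quadraticChar F (1 - β ^ 2)) (quadraticChar F (1 - β ^ 4)) (quadraticChar F 2) m := by
  have h5 : β ^ 5 = 1 := hβ ▸ pow_orderOf_eq_one β
  have hn : ∀ n, 0 < n → n < 5 → 1 - β ^ n ≠ 0 := by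
    intro n h0 h1 h
    have := orderOf_le_of_pow_eq_one h0 (sub_eq_zero.mp h).symm
    omega
  have n1 := hn 1 (by norm_num) (by norm_num)
  have n2 := hn 2 (by norm_num) (by norm_num)
  have n3 := hn 3 (by norm_num) (by norm_num)
  have n4 := hn 4 (by norm_num) (by norm_num)
  have e1 : quadraticChar F (1 - β ^ 1) = quadraticChar F (1 - β ^ 4) := by
    have : 1 - β ^ 1 = (-β ^ 1) * (1 - β ^ 4) := by linear_combination -h5
    rw [this, map_mul, chi_pow_one _ hm β h5 ⟨1, Or.inr rfl⟩, one_mul]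
  have e3 : quadraticChar F (1 - β ^ 3) = quadraticChar F (1 - β ^ 2) := by
    have : 1 - β ^ 3 = (-β ^ 3) * (1 - β ^ 2) := by linear_combination -h5
    rw [this, map_mul, chi_pow_one _ hm β h5 ⟨3, Or.inr rfl⟩, one_mul]
  have d1 := chi_div (1 + β ^ 1) (1 - β ^ 1) (1 - β ^ 2) (by ring) n1
  have d2 := chi_div (1 + β ^ 2) (1 - β ^ 2) (1 - β ^ 4) (by ring) n2
  have d3 := chi_div (1 + β ^ 3) (1 - β ^ 3) (1 - β ^ 1) (by linear_combination (-β) * h5) n3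
  have d4 := chi_div (1 + β ^ 4) (1 - β ^ 4) (1 - β ^ 3) (by linear_combination (-β ^ 3) * h5) n4
  rw [e1] at d1 d3
  rw [e3] at d3 d4
  have c2 : 1 - (-β) ^ 2 = 1 - β ^ 2 := by ring
  have c1 : 1 - (-β) ^ 1 = 1 + β ^ 1 := by ring
  have c3 : 1 - (-β) ^ 3 = 1 + β ^ 3 := by ring
  have c4 : 1 - (-β) ^ 4 = 1 - β ^ 4 := by ring
  have c5 : 1 - (-β) ^ 5 = 2 := by linear_combination h5
  have c6 : 1 - (-β) ^ 6 = 1 - β ^ 1 := by linear_combination (-β) * h5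
  have c7 : 1 - (-β) ^ 7 = 1 + β ^ 2 := by linear_combination (β ^ 2) * h5
  have c8 : 1 - (-β) ^ 8 = 1 - β ^ 3 := by linear_combination (-β ^ 3) * h5
  have c9 : 1 - (-β) ^ 9 = 1 + β ^ 4 := by linear_combination (β ^ 4) * h5
  fin_cases m
  · simp [ff]
  · change quadraticChar F (1 - (-β) ^ 1) = _ * _; rw [c1, d1]
  · change quadraticChar F (1 - (-β) ^ 2) = quadraticChar F _; rw [c2]
  · change quadraticChar F (1 - (-β) ^ 3) = _ * _; rw [c3, d3, mul_comm]
  · change quadraticChar F (1 - (-β) ^ 4) = quadraticChar F _; rw [c4]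
  · change quadraticChar F (1 - (-β) ^ 5) = quadraticChar F _; rw [c5]
  · change quadraticChar F (1 - (-β) ^ 6) = quadraticChar F _; rw [c6, e1]
  · change quadraticChar F (1 - (-β) ^ 7) = _ * _; rw [c7, d2, mul_comm]
  · change quadraticChar F (1 - (-β) ^ 8) = quadraticChar F _; rw [c8, e3]
  · change quadraticChar F (1 - (-β) ^ 9) = _ * _; rw [c9, d4]

theorem chi_diff (hm : quadraticChar F (-1) = 1) (β : F) (hβ : orderOf β = 5) (i j : Fin 10) :
    quadraticChar F ((-β) ^ (i : ℕ) - (-β) ^ (j : ℕ)) =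
      ff (quadraticChar F (1 - β ^ 2)) (quadraticChar F (1 - β ^ 4)) (quadraticChar F 2) (j - i) := by
  have h5 : β ^ 5 = 1 := hβ ▸ pow_orderOf_eq_one β
  have h10 : (-β) ^ 10 = 1 := by linear_combination (β ^ 5 + 1) * h5
  rw [← chi_ff hm β hβ]
  have h1 : (-β) ^ (j : ℕ) = (-β) ^ (i : ℕ) * (-β) ^ ((j - i : Fin 10) : ℕ) := by
    rw [← pow_add]
    have : ((i : ℕ) + ((j - i : Fin 10) : ℕ)) % 10 = (j : ℕ) := by
      rw [Fin.val_sub]; omega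
    rw [← Nat.div_add_mod ((i : ℕ) + ((j - i : Fin 10) : ℕ)) 10, this, pow_add, pow_mul, h10,
      one_pow, one_mul]
  have h2 : (-β) ^ (i : ℕ) - (-β) ^ (j : ℕ) =
      (-β) ^ (i : ℕ) * (1 - (-β) ^ ((j - i : Fin 10) : ℕ)) := by rw [h1]; ring
  rw [h2, map_mul, chi_pow_one ((-β) ^ (i : ℕ)) hm β h5 ⟨i, ?_⟩, one_mul]
  rcases Nat.even_or_odd (i : ℕ) with h | h
  · left; exact h.neg_pow β
  · right; exact h.neg_pow β

def tt (β : F) (x : Fin 10 × Fin 10 × Fin 10) : ℤ :=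
  sg (embedPt F ((-β) ^ (x.1 : ℕ))) (embedPt F ((-β) ^ (x.2.1 : ℕ))) (embedPt F ((-β) ^ (x.2.2 : ℕ)))

theorem trip_card (β : F) (hr : IsPrimitiveRoot (-β) 10) (s : ℤ) :
    Nat.card (trip F 10 s) = (Finset.univ.filter (fun x => tt β x = s)).card := by
  have h0 : Nat.card {x | tt β x = s} = (Finset.univ.filter (fun x => tt β x = s)).card := by
    rw [Nat.card_eq_fintype_card]
    exact Fintype.card_subtype _
  rw [← h0]
  symm
  refine Nat.card_congr (Equiv.ofBijective (fun x : {x | tt β x = s} =>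
    (⟨((-β) ^ (x.1.1 : ℕ), (-β) ^ (x.1.2.1 : ℕ), (-β) ^ (x.1.2.2 : ℕ)), ?_, ?_, ?_, x.2⟩ : trip F 10 s)) ⟨?_, ?_⟩)
  any_goals
    change _ ^ 10 = 1
    rw [← pow_mul, mul_comm, pow_mul, hr.pow_eq_one, one_pow]
  · rintro ⟨⟨i, j, k⟩, h⟩ ⟨⟨i', j', k'⟩, h'⟩ e
    have e := congrArg Subtype.val e
    simp only [Subtype.mk.injEq, Prod.mk.injEq] at e ⊢
    exact ⟨Fin.ext (hr.pow_inj i.2 i'.2 e.1), Fin.ext (hr.pow_inj j.2 j'.2 e.2.1),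
      Fin.ext (hr.pow_inj k.2 k'.2 e.2.2)⟩
  · rintro ⟨⟨a, b, c⟩, ha, hb, hc, hs⟩
    obtain ⟨i, hi, rfl⟩ := hr.eq_pow_of_pow_eq_one ha
    obtain ⟨j, hj, rfl⟩ := hr.eq_pow_of_pow_eq_one hb
    obtain ⟨k, hk, rfl⟩ := hr.eq_pow_of_pow_eq_one hc
    exact ⟨⟨(⟨i, hi⟩, ⟨j, hj⟩, ⟨k, hk⟩), hs⟩, rfl⟩

theorem trip_diff (hm : quadraticChar F (-1) = 1) (h2 : (2 : F) ≠ 0) (β : F) (hβ : orderOf β = 5)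
    (hr : IsPrimitiveRoot (-β) 10) :
    (Nat.card (trip F 10 1) : ℤ) - Nat.card (trip F 10 (-1)) =
      120 * ((quadraticChar F (1 - β ^ 2) + quadraticChar F (1 - β ^ 4)) *
        (2 + quadraticChar F 2)) := by
  have hn : ∀ n, 0 < n → n < 5 → 1 - β ^ n ≠ 0 := by
    intro n h0 h1 h
    have := orderOf_le_of_pow_eq_one h0 (sub_eq_zero.mp h).symm
    omega
  rw [← ff_sum _ _ _ (quadraticChar_dichotomy (hn 2 (by norm_num) (by norm_num)))
    (quadraticChar_dichotomy (hn 4 (by norm_num) (by norm_num))) (quadraticChar_dichotomy h2),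
    trip_card β hr, trip_card β hr, Finset.card_filter, Finset.card_filter]
  push_cast
  rw [← Finset.sum_sub_distrib]
  apply Finset.sum_congr rfl
  intro x _
  rw [← chi_diff hm β hβ, ← chi_diff hm β hβ, ← chi_diff hm β hβ, ← map_mul, ← map_mul, ← sg_embed]
  change _ = tt β x
  have : tt β x = 0 ∨ tt β x = 1 ∨ tt β x = -1 := quadraticChar_isQuadratic F _
  rcases this with h | h | h <;> rw [h] <;> norm_num

theorem block_count (k : ℕ) (p₁ p₂ p₃ : PP F) (h : sg p₁ p₂ p₃ ≠ 0) (T : Set (PP F))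
    (hT : T = {p₁, p₂, p₃}) :
    {S ∈ designBlocks F k | T ⊆ S}.ncard * Nat.card (SS F k) =
      Nat.card (trip F k (sg p₁ p₂ p₃)) * Nat.card (KK F) := by
  rw [← card_NN1 k p₁ p₂ p₃ h, card_NN2 k p₁ p₂ p₃ T hT]

theorem design_iff (hc : ringChar F ≠ 2) (k : ℕ) (hpos : Nat.card (trip F k 1) + Nat.card (trip F k (-1)) ≠ 0) :
    gives3Design F k ↔ Nat.card (trip F k 1) = Nat.card (trip F k (-1)) := by
  classical
  have hS : 0 < Nat.card (SS F k) := by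
    have : Nonempty (SS F k) := ⟨⟨1, image_one _⟩⟩
    exact Nat.card_pos
  have hK : 0 < Nat.card (KK F) := by
    have : Nonempty (KK F) := ⟨⟨1, mapSL_one⟩⟩
    exact Nat.card_pos
  have std : ∀ c : F, c ≠ 0 → ∃ T : Finset (PP F), T.card = 3 ∧
      {S ∈ designBlocks F k | (T : Set (PP F)) ⊆ S}.ncard * Nat.card (SS F k) =
      Nat.card (trip F k (quadraticChar F c)) * Nat.card (KK F) := by
    intro c hc
    have hs : sg (inftyPt F) (embedPt F 0) (embedPt F c) ≠ 0 := by
      rw [sg_std, ne_eq, quadraticChar_eq_zero_iff]; exact hc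
    have hd := (sg_ne_zero_iff _ _ _).mp hs
    refine ⟨{inftyPt F, embedPt F 0, embedPt F c}, ?_, ?_⟩
    · exact Finset.card_eq_three.mpr ⟨_, _, _, hd.1, hd.2.2.symm, hd.2.1, rfl⟩
    · rw [block_count k _ _ _ hs _ (by simp), sg_std]
  obtain ⟨c, hcc⟩ := quadraticChar_exists_neg_one hc
  have hc0 : c ≠ 0 := by rintro rfl; simp at hcc
  obtain ⟨T1, hT1, e1⟩ := std 1 one_ne_zero
  obtain ⟨T2, hT2, e2⟩ := std c hc0
  rw [hcc] at e2
  rw [map_one] at e1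
  constructor
  · rintro ⟨lam, hl, H⟩
    rw [H _ hT1] at e1
    rw [H _ hT2] at e2
    exact Nat.eq_of_mul_eq_mul_right hK (e1.symm.trans e2)
  · intro H
    refine ⟨{S ∈ designBlocks F k | (T1 : Set (PP F)) ⊆ S}.ncard, ?_, ?_⟩
    · apply Nat.pos_of_ne_zero
      intro h0
      rw [h0, zero_mul] at e1
      rcases Nat.mul_eq_zero.mp e1.symm with h | h <;> omega
    · intro T hT
      obtain ⟨x, y, z, hxy, hxz, hyz, rfl⟩ := Finset.card_eq_three.mp hT
      have hs : sg x y z ≠ 0 := (sg_ne_zero_iff _ _ _).mpr ⟨hxy, hyz, hxz.symm⟩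
      have e := block_count k x y z hs _ (show (({x, y, z} : Finset (PP F)) : Set (PP F)) = _ by simp)
      have h3 : sg x y z = 0 ∨ sg x y z = 1 ∨ sg x y z = -1 := quadraticChar_isQuadratic F _
      apply Nat.eq_of_mul_eq_mul_right hS
      rw [e, e1]
      rcases h3 with h | h | h
      · exact absurd h hs
      · rw [h]
      · rw [h, H]

end helpers

/-- Theorem 4.1, (ii) ↔ (iii): for `q ≡ 1 (mod 20)` and `β` a primitive 5th root
of unity, `(q,10)` gives a 3-design iff `χ(1+β) = -1`. -/
theorem stmt_13 (F : Type) [Field F] [Fintype F] [DecidableEq F]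
    (q : ℕ) (hq : Fintype.card F = q) (hq20 : q % 20 = 1)
    (β : F) (hβ : orderOf β = 5) :
    gives3Design F 10 ↔ quadraticChar F (1 + β) = -1 := by
  have hodd : ¬ 2 ∣ q := by omega
  have hc : ringChar F ≠ 2 := by
    intro h
    have := FiniteField.even_card_iff_char_two.mp h
    omega
  have h2 : (2 : F) ≠ 0 := Ring.two_ne_zero hc
  have hm : quadraticChar F (-1) = 1 := by
    rw [quadraticChar_one_iff_isSquare (by simp), FiniteField.isSquare_neg_one_iff]
    omega
  have h5 : β ^ 5 = 1 := hβ ▸ pow_orderOf_eq_one β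
  have hord : orderOf (-β) = 10 := by
    rw [neg_eq_neg_one_mul, (Commute.all (-1 : F) β).orderOf_mul_eq_mul_orderOf_of_coprime]
    · rw [orderOf_neg_one, if_neg hc, hβ]
    · rw [orderOf_neg_one, if_neg hc, hβ]; norm_num
  have hr : IsPrimitiveRoot (-β) 10 := hord ▸ IsPrimitiveRoot.orderOf (-β)
  have hn : ∀ n, 0 < n → n < 5 → 1 - β ^ n ≠ 0 := by
    intro n h0 h1 h
    have := orderOf_le_of_pow_eq_one h0 (sub_eq_zero.mp h).symm
    omega
  have hne : tt β (0, 1, 2) ≠ 0 := by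
    unfold tt
    rw [sg_ne_zero_iff]
    refine ⟨?_, ?_, ?_⟩ <;> intro h <;>
      exact absurd (hr.pow_inj (Fin.isLt _) (Fin.isLt _) (embedPt_inj h)) (by decide)
  rw [design_iff hc]
  · have hd := trip_diff hm h2 β hβ hr
    have e : quadraticChar F (1 + β) = quadraticChar F (1 - β ^ 2) * quadraticChar F (1 - β ^ 4) := by
      have := chi_ff hm β hβ 1
      simpa [ff] using this
    have key : Nat.card (trip F 10 1) = Nat.card (trip F 10 (-1)) ↔
      (120 * ((quadraticChar F (1 - β ^ 2) + quadraticChar F (1 - β ^ 4)) *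
        (2 + quadraticChar F 2)) : ℤ) = 0 := by
      rw [← hd]; omega
    rw [key, e]
    rcases quadraticChar_dichotomy (hn 2 (by norm_num) (by norm_num)) with ha | ha <;>
    rcases quadraticChar_dichotomy (hn 4 (by norm_num) (by norm_num)) with hb | hb <;>
    rcases quadraticChar_dichotomy h2 with hc | hc <;> rw [ha, hb, hc] <;> norm_num
  · rw [trip_card β hr, trip_card β hr]
    have : tt β (0, 1, 2) = 0 ∨ tt β (0, 1, 2) = 1 ∨ tt β (0, 1, 2) = -1 :=
      quadraticChar_isQuadratic F _
    rcases this with h | h | h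
    · exact absurd h hne
    · have := Finset.card_pos.mpr ⟨_, Finset.mem_filter (p := fun x => tt β x = 1).mpr ⟨Finset.mem_univ (0, 1, 2), h⟩⟩
      omega
    · have := Finset.card_pos.mpr ⟨_, Finset.mem_filter (p := fun x => tt β x = -1).mpr ⟨Finset.mem_univ (0, 1, 2), h⟩⟩
      omega
end
end

section
/- Let q be a prime power with q ≡ 1 (mod 20) and let β be a primitive 5th root of unity in F_q. Then χ(1+β) = −1 if and only if there exists θ ∈ F_q^× with χ(θ) = −1 and θ² − 4θ − 1 = 0, where χ is the quadratic residue character of F_q. -/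
/-- Theorem 4.1, (iii) ↔ (iv): for `q ≡ 1 (mod 20)` and `β` a primitive 5th root
of unity in `F_q`, `χ(1+β) = -1` iff there exists a nonsquare `θ ∈ F_qˣ` with
`θ² - 4θ - 1 = 0`, where `χ` is the quadratic residue character. -/
theorem stmt_14 (F : Type) [Field F] [Fintype F] [DecidableEq F]
    (q : ℕ) (hq : Fintype.card F = q) (hq20 : q % 20 = 1)
    (β : F) (hβ : orderOf β = 5) :
    quadraticChar F (1 + β) = -1 ↔
      ∃ θ : F, θ ≠ 0 ∧ quadraticChar F θ = -1 ∧ θ ^ 2 - 4 * θ - 1 = 0 := by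
  have h5 : β ^ 5 = 1 := by rw [← hβ]; exact pow_orderOf_eq_one β
  have h1 : β ≠ 1 := by
    rintro rfl
    simp at hβ
  have h0 : β ≠ 0 := by
    rintro rfl
    simp at h5
  have hsum : 1 + β + β ^ 2 + β ^ 3 + β ^ 4 = 0 := by
    have : (β - 1) * (1 + β + β ^ 2 + β ^ 3 + β ^ 4) = 0 := by linear_combination h5
    exact (mul_eq_zero.mp this).resolve_left (sub_ne_zero.mpr h1)
  obtain ⟨s, hs⟩ : ∃ s, s = β ^ 2 + β ^ 3 := ⟨_, rfl⟩
  have hs2 : s ^ 2 + s - 1 = 0 := by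
    rw [hs]; linear_combination (2 + β) * h5 + hsum
  have hs0 : s ≠ 0 := by
    intro h
    rw [h] at hs2
    simp at hs2
  have hneg : quadraticChar F (-1) = 1 := by
    rw [quadraticChar_one_iff_isSquare (by simp), FiniteField.isSquare_neg_one_iff]
    omega
  have hc : quadraticChar F (1 + β) = quadraticChar F s := by
    have : 1 + β = (β ^ 4) ^ 2 * s := by
      rw [hs]; linear_combination (-(1 + β) * (β ^ 5 + 1)) * h5
    rw [this, map_mul, quadraticChar_sq_one' (pow_ne_zero _ h0), one_mul]
  have ht : quadraticChar F (1 - 2 * s) = quadraticChar F s := by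
    have : 1 - 2 * s = (-1) * (s ^ 2 * s) := by linear_combination (s - 1) * hs2
    rw [this, map_mul, map_mul, quadraticChar_sq_one' hs0, hneg, one_mul, one_mul]
  rw [hc]
  constructor
  · intro h
    refine ⟨1 - 2 * s, ?_, by rw [ht, h], by linear_combination 4 * hs2⟩
    intro h'
    rw [h'] at ht
    rw [← ht] at h
    simp at h
  · rintro ⟨θ, hθ0, hθ, he⟩
    have hp : (θ - (1 - 2 * s)) * (θ - (3 + 2 * s)) = 0 := by
      linear_combination he - 4 * hs2
    rcases mul_eq_zero.mp hp with h | h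
    · rw [← ht, ← sub_eq_zero.mp h, hθ]
    · have hm : (1 - 2 * s) * θ = -1 := by
        rw [sub_eq_zero.mp h]; linear_combination -4 * hs2
      have := congrArg (quadraticChar F) hm
      rw [map_mul, ht, hθ, hneg] at this
      linarith
end

section
/- Let q be a prime power with q ≡ 1 (mod 20), let α be a primitive root (generator of F_q^×), and let β be a primitive 5th root of unity in F_q. Then χ(1+β) = −1 if and only if 5 is not an element of the subgroup ⟨α⁴⟩ of F_q^× (equivalently, 5 is not a fourth power in F_q^×), where χ is the quadratic residue character of F_q. -/
/-- Theorem 4.1, (iii) ↔ (v): for `q ≡ 1 (mod 20)`, `α` a primitive root of `F_q`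
and `β` a primitive 5th root of unity, `χ(1+β) = -1` iff `5 ∉ ⟨α⁴⟩`, i.e. `5` is
not a fourth power in `F_qˣ`. -/
theorem stmt_15 (F : Type) [Field F] [Fintype F] [DecidableEq F]
    (q : ℕ) (hq : Fintype.card F = q) (hq20 : q % 20 = 1)
    (α : Fˣ) (hα : ∀ x : Fˣ, x ∈ Subgroup.zpowers α)
    (β : F) (hβ : orderOf β = 5) :
    quadraticChar F (1 + β) = -1 ↔
      ∀ u : Fˣ, (u : F) = 5 → u ∉ Subgroup.zpowers (α ^ 4) := by
  have h5 : β ^ 5 = 1 := by rw [← hβ]; exact pow_orderOf_eq_one β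
  have h1 : β ≠ 1 := by
    rintro rfl
    simp at hβ
  have hc : 1 + β + β ^ 2 + β ^ 3 + β ^ 4 = 0 := by
    have h : (β - 1) * (1 + β + β ^ 2 + β ^ 3 + β ^ 4) = 0 := by linear_combination h5
    exact (mul_eq_zero.mp h).resolve_left (sub_ne_zero.mpr h1)
  have hb0 : β ≠ 0 := by
    rintro rfl
    simp at h5
  have h2 : 1 + β ≠ 0 := by
    intro h
    have hb : β = -1 := by linear_combination h
    rw [hb] at hc
    apply one_ne_zero (α := F)
    linear_combination hc
  have hs1 : 1 - β ≠ 0 := sub_ne_zero.mpr (Ne.symm h1)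
  have hs5 : (((β ^ 3) * (1 - β)) ^ 2 * (1 + β)) ^ 2 = 5 := by
    have e : ((β ^ 3) * (1 - β)) ^ 2 * (1 + β) = β - β ^ 2 - β ^ 3 + β ^ 4 := by
      linear_combination (β * (1 - β) ^ 2 * (1 + β)) * h5
    rw [e]
    linear_combination (4 - β - 2 * β ^ 2 + β ^ 3) * h5 - hc
  obtain ⟨i, hi⟩ : IsSquare (-1 : F) := by
    rw [FiniteField.isSquare_neg_one_iff, hq]; omega
  have ht0 : (β ^ 3) * (1 - β) ≠ 0 := mul_ne_zero (pow_ne_zero _ hb0) hs1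
  generalize (β ^ 3) * (1 - β) = t at hs5 ht0
  have h50 : (5 : F) ≠ 0 := by
    rw [← hs5]; exact pow_ne_zero _ (mul_ne_zero (pow_ne_zero _ ht0) h2)
  rw [quadraticChar_neg_one_iff_not_isSquare, ← not_iff_not, not_not]
  push Not
  constructor
  · rintro ⟨r, hr⟩
    have hx : (t * r) ^ 4 = 5 := by
      rw [← hs5, hr]; ring
    have hx0 : t * r ≠ 0 := by
      intro h
      rw [h] at hx
      exact h50 (by rw [← hx]; ring)
    refine ⟨Units.mk0 (t * r) hx0 ^ 4, by simpa using hx, ?_⟩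
    obtain ⟨k, hk⟩ := Subgroup.mem_zpowers_iff.mp (hα (Units.mk0 (t * r) hx0))
    rw [← hk, Subgroup.mem_zpowers_iff]
    refine ⟨k, ?_⟩
    rw [← zpow_natCast, ← zpow_natCast, ← zpow_mul, ← zpow_mul, mul_comm]
  · rintro ⟨u, hu, hm⟩
    obtain ⟨k, hk⟩ := Subgroup.mem_zpowers_iff.mp hm
    have hy : u = (α ^ k) ^ 4 := by
      rw [← hk, ← zpow_natCast, ← zpow_natCast, ← zpow_mul, ← zpow_mul, mul_comm]
    generalize α ^ k = y at hy
    have hy5 : (y : F) ^ 4 = 5 := by rw [← hu, hy]; simp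
    have hf : ((y : F) ^ 2 - t ^ 2 * (1 + β)) * ((y : F) ^ 2 + t ^ 2 * (1 + β)) = 0 := by
      linear_combination hy5 - hs5
    rcases mul_eq_zero.mp hf with h | h
    · refine ⟨y / t, ?_⟩
      field_simp
      linear_combination -h
    · refine ⟨i * y / t, ?_⟩
      field_simp
      linear_combination h + (y : F) ^ 2 * hi
end
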